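/- Let (M, H) be a sufficiently saturated H-structure, let φ(x, z̄, ȳ) be an L-formula, and consider the L_H-formula ψ(x, ȳ) := ∃z̄ ∈ H^{|z̄|} φ(x, z̄, ȳ). Then the set E = {ā ∈ M^{|ȳ|} : ψ(x, ā) is non-algebraic} is L_H-definable. -/

import Mathlib

open FirstOrder

namespace HPaper

universe u v w

variable {M : Type w} (L : FirstOrder.Language.{u, v}) [L.Structure M]


/-- `x` is (model-theoretically) algebraic over the parameter set `A`:
it satisfies a formula with parameters in `A` having finitely many solutions. -/
def acl (A : Set M) : Set M :=
  {x : M | ∃ φ : (L.withConstants A).Formula (Fin 1),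
      {y : M | φ.Realize (fun _ => y)}.Finite ∧ φ.Realize (fun _ => x)}

/-- Two tuples have the same `L`-type over the parameter set `A`. -/
def SameType (A : Set M) {α : Type*} (a b : α → M) : Prop :=
  ∀ φ : (L.withConstants A).Formula α, φ.Realize a ↔ φ.Realize b

/-- The (algebraic-closure) dimension of a finite tuple over a base set: the least
cardinality of a subtuple over which (together with the base) the whole tuple is algebraic. -/
noncomputable def dim {α : Type*} [Fintype α] (a : α → M) (B : Set M) : ℕ :=
  sInf {k : ℕ | ∃ s : Finset α, s.card = k ∧ ∀ i, a i ∈ acl L (B ∪ (a '' ↑s))}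

/-- The tuple `a` is algebraically independent from `C` over `B`. -/
def Indep {α : Type*} [Fintype α] (a : α → M) (B C : Set M) : Prop :=
  dim L a (B ∪ C) = dim L a B

/-- The set `A` is algebraically independent from `C` over `B`. -/
def SetIndep (A B C : Set M) : Prop :=
  ∀ (n : ℕ) (a : Fin n → M), (∀ i, a i ∈ A) → Indep L a B C

/-- `A` is `H`-independent: `A` is independent from `H` over `A ∩ H`. -/
def HIndepSet (H A : Set M) : Prop :=
  SetIndep L A (A ∩ H) H

/-- A tuple is `H`-independent. -/
def HIndepTuple (H : Set M) {α : Type*} [Fintype α] (a : α → M) : Prop :=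
  Indep L a (Set.range a ∩ H) H

/-- `A` has finite dimension. -/
def FinDim (A : Set M) : Prop :=
  ∃ s : Finset M, A ⊆ acl L ↑s

/-- The exchange property for algebraic closure. -/
def Exchange (L' : FirstOrder.Language.{u, v}) (N : Type w) [L'.Structure N] : Prop :=
  ∀ (A : Set N) (a b : N), a ∈ acl L' (A ∪ {b}) → a ∉ acl L' A → b ∈ acl L' (A ∪ {a})

/-- Uniform elimination of the quantifier `∃^∞` in the structure `N`. -/
def ElimInfty (L' : FirstOrder.Language.{u, v}) (N : Type w) [L'.Structure N] : Prop :=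
  ∀ (q : ℕ) (φ : L'.Formula (Fin 1 ⊕ Fin q)), ∃ Nb : ℕ, ∀ v : Fin q → N,
    {x : N | φ.Realize (Sum.elim (fun _ => x) v)}.Finite →
      {x : N | φ.Realize (Sum.elim (fun _ => x) v)}.ncard ≤ Nb

/-- `N` is a geometric structure: acl satisfies exchange and `∃^∞` is eliminated. -/
def Geometric (L' : FirstOrder.Language.{u, v}) (N : Type w) [L'.Structure N] : Prop :=
  Exchange L' N ∧ ElimInfty L' N

/-- The density property of the pair `(M, H)`. -/
def DensityProp (H : Set M) : Prop :=
  ∀ A : Set M, FinDim L A → ∀ a : M, a ∉ acl L A →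
    ∃ h ∈ H, SameType L A (fun _ : Fin 1 => a) (fun _ => h)

/-- The extension property of the pair `(M, H)`. -/
def ExtensionProp (H : Set M) : Prop :=
  ∀ A : Set M, FinDim L A → ∀ a : M, a ∉ acl L A →
    ∃ b : M, b ∉ acl L (A ∪ H) ∧ SameType L A (fun _ : Fin 1 => a) (fun _ => b)

/-- `H` is an algebraically independent set. -/
def AclIndepSet (H : Set M) : Prop :=
  ∀ h ∈ H, h ∉ acl L (H \ {h})

/-- `(M, H)` is an `H`-structure. -/
def IsHStructure (H : Set M) : Prop :=
  DensityProp L H ∧ ExtensionProp L H ∧ AclIndepSet L H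

/-- `h` enumerates an `H`-basis of the tuple `a` over the set `A`: a minimal-length tuple of
distinct elements of `H` such that `a⌢h` is independent from `H` over `A`. -/
def IsHBasis (H : Set M) (A : Set M) {α : Type*} [Fintype α] {k : ℕ}
    (a : α → M) (h : Fin k → M) : Prop :=
  (∀ i, h i ∈ H) ∧ Function.Injective h ∧ Indep L (Sum.elim a h) A H ∧
    ∀ (k' : ℕ) (h' : Fin k' → M), (∀ i, h' i ∈ H) → Indep L (Sum.elim a h') A H → k ≤ k'

/-- Countable saturation (a rendering of "sufficiently saturated", adequate for
the countably-many-parameters arguments in the paper). -/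
def CountSaturated (L' : FirstOrder.Language.{u, v}) (N : Type w) [L'.Structure N] : Prop :=
  ∀ (A : Set N), A.Countable → ∀ (n : ℕ)
    (S : Set ((L'.withConstants A).Formula (Fin n))),
    (∀ F : Finset ((L'.withConstants A).Formula (Fin n)), ↑F ⊆ S →
      ∃ a : Fin n → N, ∀ φ ∈ F, φ.Realize a) →
    ∃ a : Fin n → N, ∀ φ ∈ S, φ.Realize a

/-- The theory of `M` is nowhere trivial. -/
def NowhereTrivial (L' : FirstOrder.Language.{u, v}) (N : Type w) [L'.Structure N] : Prop :=
  ∀ (A : Set N), A.Countable → ∀ a : N, a ∉ acl L' A →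
    ∃ (m k : ℕ) (b : Fin m → N) (c : Fin k → N),
      Indep L' (fun _ : Fin 1 => a) A (Set.range b) ∧
      Indep L' (fun _ : Fin 1 => a) A (Set.range c) ∧
      a ∈ acl L' ((A ∪ Set.range b) ∪ Set.range c)



/-- The formula `φ(x̄, b̄)` divides over `A`: there is an `A`-indiscernible sequence of
tuples, each with the same type as `b̄` over `A`, along which the instances of `φ` are
`k`-inconsistent. -/
def FormulaDivides {α : Type*} {m : ℕ} (φ : L.Formula (α ⊕ Fin m))
    (b : Fin m → M) (A : Set M) : Prop :=
  ∃ (bs : ℕ → Fin m → M) (k : ℕ), 0 < k ∧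
    (∀ i, SameType L A (bs i) b) ∧
    (∀ (l : ℕ) (f g : Fin l → ℕ), StrictMono f → StrictMono g →
      SameType L A (fun p : Fin l × Fin m => bs (f p.1) p.2)
        (fun p : Fin l × Fin m => bs (g p.1) p.2)) ∧
    (∀ s : Finset ℕ, s.card = k → ¬ ∃ x : α → M, ∀ i ∈ s, φ.Realize (Sum.elim x (bs i)))

/-- The formula `φ(x̄, b̄)` forks over `A`: it implies a finite disjunction of formulas,
each of which divides over `A`. -/
def FormulaForks {α : Type*} {m : ℕ} (φ : L.Formula (α ⊕ Fin m))
    (b : Fin m → M) (A : Set M) : Prop :=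
  ∃ (N : ℕ) (m' : Fin N → ℕ) (ψ : ∀ j, L.Formula (α ⊕ Fin (m' j)))
    (c : ∀ j, Fin (m' j) → M),
    (∀ j, FormulaDivides L (ψ j) (c j) A) ∧
    ∀ x : α → M, φ.Realize (Sum.elim x b) → ∃ j, (ψ j).Realize (Sum.elim x (c j))

/-- The type of `ā` over `B` forks over `A`. -/
def TypeForks {α : Type*} (a : α → M) (B A : Set M) : Prop :=
  ∃ (m : ℕ) (φ : L.Formula (α ⊕ Fin m)) (b : Fin m → M),
    (∀ i, b i ∈ B) ∧ φ.Realize (Sum.elim a b) ∧ FormulaForks L φ b A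

/-- `SUge L a A α` : the `SU`-rank of `tp(ā/A)` is at least `α`. -/
noncomputable def SUge {α' : Type*} (a : α' → M) (o : Ordinal.{0}) (A : Set M) : Prop :=
  Ordinal.lt_wf.fix (C := fun _ => Set M → Prop)
    (fun o ih A => ∀ β (h : β < o), ∃ B : Set M, A ⊆ B ∧ TypeForks L a B A ∧ ih β h B) o A

/-- The `SU`-rank of `tp(ā/A)`, as an ordinal (assuming it is ordinal-valued). -/
noncomputable def SU {α' : Type*} (a : α' → M) (A : Set M) : Ordinal.{0} :=
  sSup {o : Ordinal | SUge L a o A}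

/-- `T` has `SU`-rank one: every non-algebraic `1`-type has `SU`-rank `1`. -/
def SURankOne (L' : FirstOrder.Language.{u, v}) (N : Type w) [L'.Structure N] : Prop :=
  (∀ (a : N) (A : Set N), a ∈ acl L' A → SU L' (fun _ : Fin 1 => a) A = 0) ∧
  (∀ (a : N) (A : Set N), a ∉ acl L' A → SU L' (fun _ : Fin 1 => a) A = 1)

/-- The `SU`-rank of the (type-)definable set `X` over `A` equals `o` (and is attained). -/
def SUSetEq {α' : Type*} (X : Set (α' → M)) (A : Set M) (o : Ordinal.{0}) : Prop :=
  (∀ a ∈ X, SU L a A ≤ o) ∧ ∃ a ∈ X, SU L a A = o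

/-- The `SU`-rank of the set `X` over `A` is (strictly) less than `o`. -/
def SUSetLt {α' : Type*} (X : Set (α' → M)) (A : Set M) (o : Ordinal.{0}) : Prop :=
  ∀ a ∈ X, SU L a A < o

/-- Shorthand for the ordinal `ω·n + k`. -/
noncomputable def wnk (n k : ℕ) : Ordinal.{0} :=
  Ordinal.omega0 * (n : Ordinal) + (k : Ordinal)



/-- The language consisting of a single unary predicate. -/
def unaryLang : FirstOrder.Language.{0, 0} :=
  ⟨fun _ => Empty, fun n => match n with | 1 => PUnit | _ => Empty⟩

/-- Interpret the unary predicate of `unaryLang` as membership in `H`. -/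
def unaryStructure (H : Set M) : unaryLang.Structure M where
  funMap := fun {_} f _ => Empty.elim f
  RelMap := fun {n} r v =>
    match n, r, v with
    | 1, _, v => v 0 ∈ H
    | 0, r, _ => Empty.elim r
    | (_ + 2), r, _ => Empty.elim r

/-- The language `L_H = L ∪ {H}`. -/
def LH (L : FirstOrder.Language.{u, v}) : FirstOrder.Language :=
  L.sum unaryLang

/-- The `L_H`-structure on `M` induced by the `L`-structure and the set `H`. -/
def hStructure (H : Set M) : (LH L).Structure M :=
  letI : unaryLang.Structure M := unaryStructure H
  inferInstanceAs ((L.sum unaryLang).Structure M)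

/-- Realization of `L_H`-formulas in `(M, H)`. -/
def RealizeH (H : Set M) {α : Type*} (φ : (LH L).Formula α) (v : α → M) : Prop :=
  letI := hStructure L H
  φ.Realize v

/-- `L_H`-definability over a parameter set, in `(M, H)`. -/
def DefinableH (H : Set M) {α : Type*} (A : Set M) (s : Set (α → M)) : Prop :=
  letI := hStructure L H
  Set.Definable A (LH L) s

/-- `acl` in the sense of `L_H` in `(M, H)`. -/
noncomputable def aclH (H : Set M) (A : Set M) : Set M :=
  letI := hStructure L H
  acl (LH L) A

/-- Equality of `L_H`-types over a parameter set, in `(M, H)`. -/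
def SameTypeH (H : Set M) (A : Set M) {α : Type*} (a b : α → M) : Prop :=
  letI := hStructure L H
  SameType (LH L) A a b


/-- `SU`-rank in the sense of `L_H`, computed in `(M, H)`. -/
noncomputable def SUH (H : Set M) {α' : Type*} (a : α' → M) (A : Set M) : Ordinal.{0} :=
  letI := hStructure L H
  SU (LH L) a A

/-- `SUge` in the sense of `L_H`, computed in `(M, H)`. -/
noncomputable def SUgeH (H : Set M) {α' : Type*} (a : α' → M) (o : Ordinal.{0})
    (A : Set M) : Prop :=
  letI := hStructure L H
  SUge (LH L) a o A

/-- The `L_H`-`SU`-rank of the set `X` over `A` equals `o` (and is attained). -/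
def SUSetEqH (H : Set M) {α' : Type*} (X : Set (α' → M)) (A : Set M)
    (o : Ordinal.{0}) : Prop :=
  letI := hStructure L H
  SUSetEq (LH L) X A o

/-- The `L_H`-`SU`-rank of the set `X` over `A` is less than `o`. -/
def SUSetLtH (H : Set M) {α' : Type*} (X : Set (α' → M)) (A : Set M)
    (o : Ordinal.{0}) : Prop :=
  letI := hStructure L H
  SUSetLt (LH L) X A o


/-- `(M, H)` is countably saturated as an `L_H`-structure. -/
def CountSaturatedH (H : Set M) : Prop :=
  letI := hStructure L H
  CountSaturated (LH L) M

/-!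
By saturation it is enough to cover both the set `E` of the theorem and its complement by
`∅`-definable sets of `L_H`. The complement is easy, as having at most `N` solutions is a
first-order condition on `a`.

Let `a ∈ E`. All but finitely many `h ∈ H` are independent from `H \ {h}` over `a`; let `H₀` be
the finite exceptional set, choose by saturation a solution `x ∉ acl(a, H₀)` of `ψ(x, a)`, and
let `z` be a tuple of `H` witnessing it. If `φ(x, z, a)` has infinitely many solutions `x`,
elimination of `∃^∞` turns this into a first-order condition on `(z, a)`. Otherwise `x ∈ acl(a, z)`,
and exchange provides an entry `h ∉ H₀` of `z` which is algebraic over `(x, a, w)` but not over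
`(a, w)`, where `w` lists `H₀` and the other entries of `z`. So there are infinitely many `k` for
which the set defined by `φ(x, z, a)`, with `k` substituted for `h` in `z`, has an element `y`
with `k ∈ acl(y, a, w)`, where a fixed algebraic formula bounds the number of `k` for each `y`.
This is again a first-order condition on `(a, w)`. Wherever it holds, density supplies infinitely
many such `k` in `H`, and since each `y` accounts for only finitely many `k`, infinitely many `y`
arise.
-/

section DefinableFamily

open Set FirstOrder.Language

variable {L} {A B : Set M} {α β γ : Type*}

variable (L) in
/-- A uniformly `A`-definable family `(R v)` of subsets of `M`, indexed by the tuples `v : β → M`.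
Its graph is encoded as a set of tuples indexed by `β ⊕ Fin 1`, with the element of `R v` as last
coordinate. -/
def DefinableFamily (A : Set M) (R : (β → M) → Set M) : Prop :=
  A.Definable L {g : β ⊕ Fin 1 → M | g (.inr 0) ∈ R (g ∘ .inl)}

theorem definable_realize [Finite β] (φ : L.Formula β) {F : (α → M) → β → M}
    (hF : A.DefinableMap L F) : A.Definable L {g | φ.Realize (F g)} :=
  ((empty_definable_iff.2 ⟨φ, rfl⟩).mono (empty_subset A)).preimage_map hF

theorem definable_exists {P : (β → M) → M → Prop}
    (hP : A.Definable L {g : β ⊕ Fin 1 → M | P (g ∘ .inl) (g (.inr 0))}) :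
    A.Definable L {v | ∃ y, P v y} := by
  convert! hP.exists_of_finite using 1
  ext v
  exact ⟨fun ⟨y, hy⟩ => ⟨fun _ => y, hy⟩, fun ⟨u, hu⟩ => ⟨u 0, hu⟩⟩

theorem definable_injective [Finite β] :
    A.Definable L {f : β → M | Function.Injective f} := by
  have hpair (i j : β) : A.Definable L {f : β → M | f i = f j → i = j} := by
    by_cases hij : i = j
    · simp [hij]
    · simpa [hij, compl_ofPred] using
        (DefinableFun.ofPred_eq (DefinableFun.proj L (A := A) (i := i)) (DefinableFun.proj L)).compl
  simpa only [Function.Injective, ofPred_forall] using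
    definable_iInter_of_finite fun i => definable_iInter_of_finite (hpair i)

theorem natCast_le_encard_iff {s : Set M} {N : ℕ} :
    N ≤ s.encard ↔ ∃ f : Fin N → M, Function.Injective f ∧ ∀ i, f i ∈ s := by
  constructor
  · intro h
    obtain ⟨t, hts, ht⟩ := exists_subset_encard_eq h
    have hcard : Nat.card t = N := by rw [Nat.card_coe_set_eq, ncard, ht, ENat.toNat_natCast]
    have : Finite t := finite_of_encard_eq_coe ht
    let e := (Finite.equivFinOfCardEq hcard).symm
    exact ⟨(↑) ∘ e, Subtype.val_injective.comp e.injective, fun i => hts (e i).2⟩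
  · rintro ⟨f, hf, hfs⟩
    simpa using hf.encard_range.trans (encard_le_encard (range_subset_iff.2 hfs))

namespace DefinableFamily

variable {R : (β → M) → Set M}

theorem mono (hR : DefinableFamily L A R) (hAB : A ⊆ B) : DefinableFamily L B R :=
  Definable.mono hR hAB

theorem definable_mem [Finite β] (hR : DefinableFamily L A R) {F : (γ → M) → β → M}
    (hF : A.DefinableMap L F) {f : (γ → M) → M} (hf : A.DefinableFun L f) :
    A.Definable L {g | f g ∈ R (F g)} := by
  have hFf : A.DefinableMap L fun g => Sum.elim (F g) fun _ : Fin 1 => f g := by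
    rintro (_ | _)
    exacts [hF _, hf]
  exact Definable.preimage_map hFf hR

theorem definable₁ [Finite β] (hR : DefinableFamily L A R) (u : β → M) :
    (A ∪ range u).Definable₁ L (R u) :=
  (hR.mono subset_union_left).definable_mem (F := fun _ => u)
    (fun i => L.definableFun_const _ (.inr (mem_range_self i))) (.proj L)

theorem definable_le_encard (hR : DefinableFamily L A R) (N : ℕ) :
    A.Definable L {v | N ≤ (R v).encard} := by
  simp only [natCast_le_encard_iff]
  have hmem : A.Definable L {g : β ⊕ Fin N → M | ∀ i, g (.inr i) ∈ R (g ∘ .inl)} := by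
    simpa only [ofPred_forall] using! definable_iInter_of_finite fun i =>
      Definable.preimage_comp (Sum.elim Sum.inl fun _ => Sum.inr i) hR
  exact ((definable_injective.preimage_comp Sum.inr).inter hmem).exists_of_finite

theorem definable_infinite (hE : ElimInfty L M) [Finite β] (hR : DefinableFamily L ∅ R) :
    (∅ : Set M).Definable L {v | (R v).Infinite} := by
  obtain ⟨n, ⟨e⟩⟩ := Finite.exists_equiv_fin β
  have hRe : (∅ : Set M).Definable L
      {g : Fin 1 ⊕ Fin n → M | g (.inl 0) ∈ R fun i => g (.inr (e i))} :=
    hR.definable_mem (fun _ => .proj L) (.proj L)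
  obtain ⟨φ, hφ⟩ := empty_definable_iff.1 hRe
  have hφR (v : β → M) : {x | φ.Realize (Sum.elim (fun _ => x) (v ∘ e.symm))} = R v := by
    ext x
    have := Set.ext_iff.1 hφ (Sum.elim (fun _ => x) (v ∘ e.symm))
    simpa using this.symm
  obtain ⟨N, hN⟩ := hE n φ
  have hbound (v : β → M) (hfin : (R v).Finite) : (R v).encard ≤ N := by
    rw [← hfin.cast_ncard_eq]
    simpa only [hφR, Nat.cast_le] using hN (v ∘ e.symm) (by rwa [hφR])
  convert! hR.definable_le_encard (N + 1) using 1
  ext v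
  refine ⟨fun hinf => by simp [hinf.encard_eq], fun hle hfin => ?_⟩
  exact N.not_succ_le_self (by exact_mod_cast hle.trans (hbound v hfin))

end DefinableFamily

end DefinableFamily

section AlgebraicClosure

open Set FirstOrder.Language

variable {L} {A B : Set M} {β : Type*} {x : M}

theorem mem_acl_iff : x ∈ acl L A ↔ ∃ s : Set M, A.Definable₁ L s ∧ s.Finite ∧ x ∈ s := by
  constructor
  · rintro ⟨φ, hfin, hx⟩
    refine ⟨_, ⟨φ, ?_⟩, hfin, hx⟩
    ext y
    rw [eq_const_of_subsingleton y 0]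
    rfl
  · rintro ⟨s, ⟨φ, hφ⟩, hfin, hx⟩
    have hs (y : M) : φ.Realize (fun _ => y) ↔ y ∈ s := (Set.ext_iff.1 hφ fun _ => y).symm
    exact ⟨φ, by simpa only [hs] using! hfin, (hs x).2 hx⟩

theorem acl_mono (h : A ⊆ B) : acl L A ⊆ acl L B := by
  intro x hx
  obtain ⟨s, hs, hfin, hx⟩ := mem_acl_iff.1 hx
  exact mem_acl_iff.2 ⟨s, hs.mono h, hfin, hx⟩

theorem subset_acl : A ⊆ acl L A := fun x hx => by
  refine mem_acl_iff.2 ⟨{x}, ?_, finite_singleton x, rfl⟩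
  exact DefinableFun.ofPred_eq (.proj L) (L.definableFun_const _ hx)

theorem exists_finset_mem_acl (hx : x ∈ acl L A) :
    ∃ t : Finset M, (t : Set M) ⊆ A ∧ x ∈ acl L (t : Set M) := by
  obtain ⟨s, hs, hfin, hx⟩ := mem_acl_iff.1 hx
  obtain ⟨t, htA, ht⟩ := definable_iff_finitely_definable.1 hs
  exact ⟨t, htA, mem_acl_iff.2 ⟨s, ht, hfin, hx⟩⟩

theorem exists_definableFamily_of_mem_acl [Finite β] {u : β → M} (hx : x ∈ acl L (A ∪ range u)) :
    ∃ R, DefinableFamily L A R ∧ (∀ v : β → M, (R v).Finite) ∧ x ∈ R u := by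
  obtain ⟨s, hs, hfin, hx⟩ := mem_acl_iff.1 hx
  obtain ⟨t, htA, ht⟩ := definable_iff_finitely_definable.1 hs
  obtain ⟨φ, hφ⟩ := definable_iff_exists_formula_sum.1 ht
  have hparam (c : t) : ∃ f : (β → M) → M, A.DefinableFun L f ∧ f u = c := by
    rcases htA c.2 with hc | ⟨i, hi⟩
    · exact ⟨_, L.definableFun_const _ hc, rfl⟩
    · exact ⟨fun v => v i, .proj L, hi⟩
  choose f hf hfu using hparam
  let Q (v : β → M) : Set M := {y | φ.Realize (Sum.elim (f · v) fun _ => y)}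
  have hQ : DefinableFamily L A Q := by
    refine definable_realize φ (F := fun g => Sum.elim (f · (g ∘ Sum.inl)) fun _ => g (.inr 0)) ?_
    rintro (c | _)
    · exact (hf c).comp fun _ => .proj L
    · exact .proj L
  have hQu : Q u = s := by
    ext y
    simpa [Q, hfu] using! (Set.ext_iff.1 hφ fun _ => y).symm
  -- Emptying the fibres of `Q` with more elements than `Q u` makes every fibre finite.
  refine ⟨fun v => {y ∈ Q v | ¬ (s.ncard + 1 : ℕ) ≤ (Q v).encard}, ?_, fun v => ?_, ?_⟩
  · exact hQ.inter ((hQ.definable_le_encard _).compl.preimage_comp Sum.inl)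
  · by_cases hv : (s.ncard + 1 : ℕ) ≤ (Q v).encard
    · simp only [hv, not_true_eq_false, and_false, ofPred_false, finite_empty]
    · exact (finite_of_encard_le_coe (not_le.1 hv).le).subset fun y hy => hy.1
  · refine ⟨hQu ▸ hx, ?_⟩
    rw [hQu, ← hfin.cast_ncard_eq, Nat.cast_le]
    exact (Nat.lt_succ_self _).not_ge

theorem mem_acl_of_mem_acl_insert {b : M} (hb : b ∈ acl L A) (hx : x ∈ acl L (insert b A)) :
    x ∈ acl L A := by
  rw [← union_singleton, ← range_const (ι := Fin 1) (c := b)] at hx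
  obtain ⟨R, hR, hRfin, hxR⟩ := exists_definableFamily_of_mem_acl hx
  obtain ⟨s, hs, hfin, hbs⟩ := mem_acl_iff.1 hb
  have hgraph : A.Definable L {g : Fin 1 ⊕ Fin 1 → M | g (.inl 0) ∈ R fun _ => g (.inr 0)} :=
    hR.definable_mem (fun _ => .proj L) (.proj L)
  have hdef : A.Definable₁ L {k | ∃ y ∈ s, k ∈ R fun _ => y} :=
    definable_exists ((hs.preimage_comp fun _ => Sum.inr 0).inter hgraph)
  refine mem_acl_iff.2 ⟨_, hdef, ?_, b, hbs, hxR⟩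
  exact (hfin.biUnion fun y _ => hRfin fun _ => y).subset fun k ⟨y, hy, hk⟩ => mem_biUnion hy hk

end AlgebraicClosure

section Exchange

open Set

variable {L} {A H : Set M}

theorem Exchange.exists_finite_notMem_acl (hex : Exchange L M) (hH : AclIndepSet L H)
    (hA : A.Finite) :
    ∃ H₀ ⊆ H, H₀.Finite ∧ ∀ h ∈ H, h ∉ H₀ → h ∉ acl L (A ∪ (H \ {h})) := by
  induction A, hA using Set.Finite.induction_on with
  | empty => exact ⟨∅, empty_subset _, finite_empty, fun h hh _ => by simpa using hH h hh⟩
  | @insert b A _ _ ih =>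
    obtain ⟨H₀, hH₀, hfin, hind⟩ := ih
    by_cases hb : b ∈ acl L (A ∪ H)
    · obtain ⟨t, ht, hbt⟩ := exists_finset_mem_acl hb
      refine ⟨H₀ ∪ (↑t ∩ H), union_subset hH₀ inter_subset_right,
        hfin.union (t.finite_toSet.inter_of_left _), fun h hh hnot hmem => ?_⟩
      have htA : (t : Set M) ⊆ A ∪ (H \ {h}) := fun y hy =>
        (ht hy).imp_right fun hyH => ⟨hyH, fun hyh => hnot (.inr ⟨hyh ▸ hy, hh⟩)⟩
      rw [insert_union] at hmem
      exact hind h hh (fun hhH₀ => hnot (.inl hhH₀))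
        (mem_acl_of_mem_acl_insert (acl_mono htA hbt) hmem)
    · refine ⟨H₀, hH₀, hfin, fun h hh hnot hmem => hb ?_⟩
      have := hex (A ∪ (H \ {h})) h b (by rwa [union_singleton, ← insert_union])
        (hind h hh hnot)
      rwa [union_assoc, sdiff_union_self, union_singleton, insert_eq_of_mem hh] at this

theorem Exchange.exists_mem_acl_insert (hex : Exchange L M) {Z : Set M} (hZ : Z.Finite) {x : M}
    (hx : x ∉ acl L A) (hxZ : x ∈ acl L (A ∪ Z)) :
    ∃ h ∈ Z, h ∉ A ∧ h ∈ acl L (insert x (A ∪ (Z \ {h}))) := by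
  induction Z, hZ using Set.Finite.induction_on with
  | empty => exact absurd (by simpa using hxZ) hx
  | @insert b Z hbZ _ ih =>
    by_cases hxZ' : x ∈ acl L (A ∪ Z)
    · obtain ⟨h, hhZ, hhA, hh⟩ := ih hxZ'
      refine ⟨h, .inr hhZ, hhA, acl_mono ?_ hh⟩
      gcongr
      exact subset_insert _ _
    · have hbA : b ∉ A := fun hb => hxZ' (by
        rwa [union_insert, insert_eq_of_mem (mem_union_left Z hb)] at hxZ)
      refine ⟨b, .inl rfl, hbA, ?_⟩
      rw [insert_sdiff_of_mem _ (mem_singleton b), sdiff_singleton_eq_self hbZ, ← union_singleton]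
      exact hex _ _ _ (by rwa [union_singleton, ← union_insert]) hxZ'

theorem Exchange.exists_interalgebraic (hex : Exchange L M) {H₀ Z : Set M} (hH₀ : H₀ ⊆ H)
    (hH₀fin : H₀.Finite) (hind : ∀ h ∈ H, h ∉ H₀ → h ∉ acl L (A ∪ (H \ {h}))) (hZ : Z ⊆ H)
    (hZfin : Z.Finite) {x : M} (hx : x ∉ acl L (A ∪ H₀)) (hxZ : x ∈ acl L (A ∪ Z)) :
    ∃ h, ∃ W ⊆ H, W.Finite ∧ Z ⊆ insert h W ∧ h ∉ acl L (A ∪ W) ∧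
      h ∈ acl L (insert x (A ∪ W)) := by
  -- Exchanging over `A ∪ H₀` rather than `A` yields `h ∉ H₀`, so that `hind` applies to it.
  obtain ⟨h, hhZ, hhH₀, hhx⟩ := hex.exists_mem_acl_insert hZfin hx
    (acl_mono (union_subset_union_left Z subset_union_left) hxZ)
  have hW : H₀ ∪ (Z \ {h}) ⊆ H \ {h} := union_subset
    (subset_sdiff_singleton hH₀ fun hh => hhH₀ (.inr hh)) (sdiff_subset_sdiff_left hZ)
  refine ⟨h, H₀ ∪ (Z \ {h}), hW.trans sdiff_subset, hH₀fin.union hZfin.sdiff,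
    fun y hy => ?_, fun hmem => ?_, by rwa [← union_assoc]⟩
  · exact (eq_or_ne y h).imp_right fun hyh => .inr ⟨hy, hyh⟩
  · exact hind h (hZ hhZ) (fun hh => hhH₀ (.inr hh)) (acl_mono (union_subset_union_right A hW) hmem)

end Exchange

section Saturation

open Set FirstOrder.Language

variable {L} {A : Set M} {n : ℕ}

theorem CountSaturated.exists_finite_sUnion_eq_univ (hsat : CountSaturated L M) (hA : A.Countable)
    {𝒟 : Set (Set (Fin n → M))} (hdef : ∀ D ∈ 𝒟, A.Definable L D) (hcover : ⋃₀ 𝒟 = univ) :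
    ∃ ℱ ⊆ 𝒟, ℱ.Finite ∧ ⋃₀ ℱ = univ := by
  by_contra! hno
  let refuted (φ : (L.withConstants A).Formula (Fin n)) : Set (Fin n → M) := {b | ¬ φ.Realize b}
  obtain ⟨a, ha⟩ := hsat A hA n (refuted ⁻¹' 𝒟) fun F hF => by
    obtain ⟨b, hb⟩ := (ne_univ_iff_exists_notMem _).1 <|
      hno (refuted '' F) (image_subset_iff.2 hF) (F.finite_toSet.image refuted)
    exact ⟨b, fun φ hφ => not_not.1 fun hbφ => hb ⟨_, mem_image_of_mem refuted hφ, hbφ⟩⟩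
  obtain ⟨D, hD, haD⟩ := hcover.ge (mem_univ a)
  obtain ⟨φ, rfl⟩ := hdef D hD
  exact ha φ.not (by simpa [refuted] using! hD) haD

theorem CountSaturated.exists_notMem_acl (hsat : CountSaturated L M) (hA : A.Countable)
    {s : Set M} (hs : A.Definable₁ L s) (hinf : s.Infinite) : ∃ d ∈ s, d ∉ acl L A := by
  by_contra! hacl
  obtain ⟨ℱ, hℱ, hfin, hcover⟩ := hsat.exists_finite_sUnion_eq_univ hA
    (𝒟 := {D : Set (Fin 1 → M) | A.Definable L D ∧ {y ∈ s | (fun _ => y) ∈ D}.Finite})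
    (fun D hD => hD.1) (by
      refine eq_univ_of_forall fun a => ?_
      by_cases has : a 0 ∈ s
      · obtain ⟨t, ht, htfin, hat⟩ := mem_acl_iff.1 (hacl _ has)
        exact ⟨_, ⟨ht, htfin.subset fun y hy => hy.2⟩, hat⟩
      · exact ⟨_, ⟨hs.compl, by simp⟩, has⟩)
  refine hinf ((hfin.biUnion fun D hD => (hℱ hD).2).subset fun y hy => ?_)
  obtain ⟨D, hD, hyD⟩ := hcover.ge (mem_univ fun _ => y)
  exact mem_biUnion hD ⟨hy, hyD⟩

/-- Compactness for the clopen set `E` in the space of types over `A`. -/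
theorem CountSaturated.definable_of_forall_exists (hsat : CountSaturated L M) (hA : A.Countable)
    {E : Set (Fin n → M)} (hE : ∀ a ∈ E, ∃ D, A.Definable L D ∧ a ∈ D ∧ D ⊆ E)
    (hEc : ∀ a ∉ E, ∃ D, A.Definable L D ∧ a ∈ D ∧ D ⊆ Eᶜ) : A.Definable L E := by
  obtain ⟨ℱ, hℱ, hfin, hcover⟩ := hsat.exists_finite_sUnion_eq_univ hA
    (𝒟 := {D | A.Definable L D ∧ (D ⊆ E ∨ D ⊆ Eᶜ)}) (fun D hD => hD.1) (by
      refine eq_univ_of_forall fun a => ?_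
      by_cases ha : a ∈ E
      · obtain ⟨D, hD, haD, hDE⟩ := hE a ha
        exact ⟨D, ⟨hD, .inl hDE⟩, haD⟩
      · obtain ⟨D, hD, haD, hDE⟩ := hEc a ha
        exact ⟨D, ⟨hD, .inr hDE⟩, haD⟩)
  have hunion : E = ⋃₀ {D ∈ ℱ | D ⊆ E} := by
    refine subset_antisymm (fun a ha => ?_) (sUnion_subset fun D hD => hD.2)
    obtain ⟨D, hD, haD⟩ := hcover.ge (mem_univ a)
    exact ⟨D, ⟨hD, (hℱ hD).2.resolve_right fun hDE => hDE haD ha⟩, haD⟩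
  have : Finite {D ∈ ℱ | D ⊆ E} := (hfin.sep _).to_subtype
  rw [hunion, sUnion_eq_iUnion]
  exact definable_iUnion_of_finite fun D => (hℱ D.2.1).1

end Saturation

section HStructure

open Set FirstOrder.Language

variable {L} {H A : Set M} {α β ζ : Type*}

theorem definableH_of_definable {D : Set (α → M)} (hD : A.Definable L D) :
    DefinableH L H A D := by
  let : unaryLang.Structure M := unaryStructure H
  have h := hD.map_expansion (LHom.sumInl : L →ᴸ L.sum unaryLang)
  exact h

theorem definableH_mem (i : α) : DefinableH L H A {v : α → M | v i ∈ H} := by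
  let : unaryLang.Structure M := unaryStructure H
  let predH : unaryLang.Relations 1 := PUnit.unit
  have hunary : (∅ : Set M).Definable unaryLang {v : α → M | v i ∈ H} := by
    refine empty_definable_iff.2 ⟨predH.formula ![Term.var i], Set.ext fun v => ?_⟩
    rw [mem_ofPred_eq, mem_ofPred_eq, Formula.realize_rel]
    rfl
  have h := (hunary.mono (empty_subset A)).map_expansion
    (LHom.sumInr : unaryLang →ᴸ L.sum unaryLang)
  exact h

theorem DefinableH.exists_mem [Finite ζ] {S : Set (α ⊕ ζ → M)} (hS : DefinableH L H A S) :
    DefinableH L H A {v : α → M | ∃ z : ζ → M, (∀ i, z i ∈ H) ∧ Sum.elim v z ∈ S} := by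
  let := hStructure L H
  have hmem : A.Definable (LH L) (⋂ i : ζ, {v : α ⊕ ζ → M | v (Sum.inr i) ∈ H}) :=
    definable_iInter_of_finite fun i => definableH_mem (Sum.inr i)
  simpa only [mem_inter_iff, mem_iInter, mem_ofPred_eq, Sum.elim_inr] using!
    (hmem.inter hS).exists_of_finite

theorem acl_subset_aclH : acl L A ⊆ aclH L H A := by
  intro x hx
  obtain ⟨s, hs, hfin, hx⟩ := mem_acl_iff.1 hx
  let := hStructure L H
  exact mem_acl_iff.2 ⟨s, definableH_of_definable hs, hfin, hx⟩

theorem CountSaturatedH.exists_notMem_acl (hsat : CountSaturatedH L H) (hA : A.Countable)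
    {s : Set M} (hs : DefinableH L H A {y : Fin 1 → M | y 0 ∈ s}) (hinf : s.Infinite) :
    ∃ d ∈ s, d ∉ acl L A := by
  let := hStructure L H
  obtain ⟨d, hds, hd⟩ := CountSaturated.exists_notMem_acl hsat hA hs hinf
  exact ⟨d, hds, fun hd' => hd (acl_subset_aclH hd')⟩

theorem SameType.mem_iff {a b : α → M} (hab : SameType L A a b) {D : Set (α → M)}
    (hD : A.Definable L D) : a ∈ D ↔ b ∈ D := by
  obtain ⟨φ, rfl⟩ := hD
  exact hab φ

theorem DensityProp.infinite_inter (hdens : DensityProp L H) (hsat : CountSaturatedH L H)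
    {s : Set M} (hs : A.Definable₁ L s) (hinf : s.Infinite) : (s ∩ H).Infinite := by
  intro hfin
  obtain ⟨t, -, ht⟩ := definable_iff_finitely_definable.1 hs
  let C : Set M := ↑t ∪ s ∩ H
  have hC : C.Finite := t.finite_toSet.union hfin
  have hsC : C.Definable₁ L s := ht.mono subset_union_left
  obtain ⟨d, hds, hd⟩ := hsat.exists_notMem_acl hC.countable (definableH_of_definable hsC) hinf
  obtain ⟨h, hhH, htype⟩ := hdens C ⟨hC.toFinset, by simpa using subset_acl⟩ d hd
  have hhC : h ∈ C := .inr ⟨(htype.mem_iff hsC).1 hds, hhH⟩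
  have hdh : d = h := (htype.mem_iff (Definable.singleton_of_mem L hhC)).2 rfl
  exact hd (subset_acl (hdh ▸ hhC))

theorem DensityProp.exists_definable_forall_infinite (hdens : DensityProp L H)
    (hsat : CountSaturatedH L H) (hE : ElimInfty L M) [Finite β]
    {Ψ : (β ⊕ Fin 1 → M) → Set M} (hΨ : DefinableFamily L ∅ Ψ) {v : β → M} {h x : M}
    (hx : x ∈ Ψ (Sum.elim v fun _ => h)) (hh : h ∉ acl L (range v))
    (hhx : h ∈ acl L (insert x (range v))) :
    ∃ X : Set (β → M), (∅ : Set M).Definable L X ∧ v ∈ X ∧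
      ∀ v' ∈ X, {y | ∃ k ∈ H, y ∈ Ψ (Sum.elim v' fun _ => k)}.Infinite := by
  have hrange : insert x (range v) = ∅ ∪ range (Sum.elim v fun _ : Fin 1 => x) := by
    rw [empty_union, Sum.elim_range, range_const, union_singleton]
  rw [hrange] at hhx
  obtain ⟨R, hR, hRfin, hhR⟩ := exists_definableFamily_of_mem_acl hhx
  let P (v' : β → M) : Set M :=
    {k | ∃ y, y ∈ Ψ (Sum.elim v' fun _ => k) ∧ k ∈ R (Sum.elim v' fun _ => y)}
  have hP : DefinableFamily L ∅ P := by
    refine definable_exists (.inter (hΨ.definable_mem ?_ (.proj L)) (hR.definable_mem ?_ (.proj L)))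
      <;> rintro (_ | _) <;> exact .proj L
  refine ⟨{v' | (P v').Infinite}, hP.definable_infinite hE, fun hfin => hh ?_,
    fun v' hv' hfin => ?_⟩
  · have hPv := hP.definable₁ v
    rw [empty_union] at hPv
    exact mem_acl_iff.2 ⟨P v, hPv, hfin, x, hx, hhR⟩
  · refine hdens.infinite_inter hsat (hP.definable₁ v') hv' ?_
    refine (hfin.biUnion fun y _ => hRfin (Sum.elim v' fun _ => y)).subset ?_
    rintro k ⟨⟨y, hy, hky⟩, hk⟩
    exact mem_biUnion ⟨k, hk, hy⟩ hky

/-- The union of the sets `Φ (v, z)` over all tuples `z` of elements of `H`; when `Φ (v, z)` is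
the set of solutions of a formula `φ(x, z, v)`, these are the solutions of
`∃ z ∈ H, φ(x, z, v)`. -/
def unionOverH (H : Set M) (Φ : (α ⊕ ζ → M) → Set M) (v : α → M) : Set M :=
  {x | ∃ z : ζ → M, (∀ i, z i ∈ H) ∧ x ∈ Φ (Sum.elim v z)}

variable {Φ : (α ⊕ ζ → M) → Set M} {a : α → M}

theorem definableFamily_unionOverH [Finite α] [Finite ζ] (hΦ : DefinableFamily L ∅ Φ) :
    letI := hStructure L H
    DefinableFamily (LH L) ∅ (unionOverH H Φ) := by
  refine DefinableH.exists_mem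
    (S := {g : (α ⊕ Fin 1) ⊕ ζ → M | g (.inl (.inr 0)) ∈ Φ (Sum.elim (g ∘ .inl ∘ .inl) (g ∘ .inr))})
    (definableH_of_definable (hΦ.definable_mem ?_ (.proj L)))
  rintro (_ | _) <;> exact .proj L

theorem exists_definableH_of_infinite_fiber (hE : ElimInfty L M) [Finite α] [Finite ζ]
    (hΦ : DefinableFamily L ∅ Φ) {z : ζ → M} (hz : ∀ i, z i ∈ H)
    (hinf : (Φ (Sum.elim a z)).Infinite) :
    ∃ X, DefinableH L H ∅ X ∧ a ∈ X ∧ X ⊆ {b | (unionOverH H Φ b).Infinite} := by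
  refine ⟨_, (definableH_of_definable (hΦ.definable_infinite hE)).exists_mem, ⟨z, hz, hinf⟩, ?_⟩
  rintro b ⟨z', hz', hinf'⟩
  exact hinf'.mono fun x hx => ⟨z', hz', hx⟩

theorem exists_definableH_of_interalgebraic (hE : ElimInfty L M) (hdens : DensityProp L H)
    (hsat : CountSaturatedH L H) [Finite α] [Finite ζ] (hΦ : DefinableFamily L ∅ Φ)
    {z : ζ → M} {x h : M} (hx : x ∈ Φ (Sum.elim a z)) {W : Set M} (hW : W ⊆ H)
    (hWfin : W.Finite) (hz : range z ⊆ insert h W) (hh : h ∉ acl L (range a ∪ W))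
    (hhx : h ∈ acl L (insert x (range a ∪ W))) :
    ∃ X, DefinableH L H ∅ X ∧ a ∈ X ∧ X ⊆ {b | (unionOverH H Φ b).Infinite} := by
  have : Finite W := hWfin
  have hσ (i : ζ) : ∃ j : W ⊕ Fin 1, Sum.elim (↑) (fun _ => h) j = z i := by
    rcases hz (mem_range_self i) with hi | hi
    · exact ⟨.inr 0, hi.symm⟩
    · exact ⟨.inl ⟨z i, hi⟩, rfl⟩
  choose σ hσ using hσ
  let Ψ (u : (α ⊕ W) ⊕ Fin 1 → M) : Set M :=
    Φ (Sum.elim (u ∘ .inl ∘ .inl) fun i => Sum.elim (u ∘ .inl ∘ .inr) (u ∘ .inr) (σ i))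
  have hΨ : DefinableFamily L ∅ Ψ := by
    refine hΦ.definable_mem ?_ (.proj L)
    rintro (i | i)
    · exact .proj L
    · cases hi : σ i <;> simpa [hi] using .proj L
  have hrange : range (Sum.elim a ((↑) : W → M)) = range a ∪ W := by
    rw [Sum.elim_range, Subtype.range_coe]
  rw [← hrange] at hh hhx
  have hxΨ : x ∈ Ψ (Sum.elim (Sum.elim a (↑)) fun _ => h) := by
    change x ∈ Φ (Sum.elim a fun i => Sum.elim (↑) (fun _ => h) (σ i))
    simpa only [hσ] using hx
  obtain ⟨X, hX, haX, hXinf⟩ := hdens.exists_definable_forall_infinite hsat hE hΨ hxΨ hh hhx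
  refine ⟨_, (definableH_of_definable hX).exists_mem, ⟨_, fun i => hW i.2, haX⟩, ?_⟩
  rintro b ⟨w, hw, hbw⟩
  refine (hXinf _ hbw).mono ?_
  rintro y ⟨k, hk, hy⟩
  refine ⟨_, fun i => ?_, hy⟩
  rcases σ i with j | _
  · exact hw j
  · exact hk

theorem exists_definableH_of_infinite (hgeom : Geometric L M) (hdens : DensityProp L H)
    (hind : AclIndepSet L H) (hsat : CountSaturatedH L H) [Finite α] [Finite ζ]
    (hΦ : DefinableFamily L ∅ Φ) (ha : (unionOverH H Φ a).Infinite) :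
    ∃ X, DefinableH L H ∅ X ∧ a ∈ X ∧ X ⊆ {b | (unionOverH H Φ b).Infinite} := by
  obtain ⟨hex, hE⟩ := hgeom
  obtain ⟨H₀, hH₀, hH₀fin, hindep⟩ := hex.exists_finite_notMem_acl hind (finite_range a)
  have hdef : DefinableH L H (range a ∪ H₀) {y : Fin 1 → M | y 0 ∈ unionOverH H Φ a} := by
    let := hStructure L H
    refine Definable.mono ((definableFamily_unionOverH hΦ).definable₁ a) ?_
    simp
  obtain ⟨x, ⟨z, hz, hxz⟩, hx⟩ :=
    hsat.exists_notMem_acl ((finite_range a).union hH₀fin).countable hdef ha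
  by_cases hfin : (Φ (Sum.elim a z)).Finite
  · have hxacl : x ∈ acl L (range a ∪ range z) := by
      have := hΦ.definable₁ (Sum.elim a z)
      rw [empty_union, Sum.elim_range] at this
      exact mem_acl_iff.2 ⟨_, this, hfin, hxz⟩
    obtain ⟨h, W, hW, hWfin, hzW, hh, hhx⟩ := hex.exists_interalgebraic hH₀ hH₀fin hindep
      (range_subset_iff.2 hz) (finite_range z) hx hxacl
    exact exists_definableH_of_interalgebraic hE hdens hsat hΦ hxz hW hWfin hzW hh hhx
  · exact exists_definableH_of_infinite_fiber hE hΦ hz hfin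

end HStructure

theorem statement6_general {M : Type w} {L : FirstOrder.Language.{u, v}} [L.Structure M]
    {H : Set M} (hgeom : Geometric L M) (hdens : DensityProp L H) (hind : AclIndepSet L H)
    (hsat : CountSaturatedH L H) {q : ℕ} {ζ : Type*} [Finite ζ]
    {Φ : (Fin q ⊕ ζ → M) → Set M} (hΦ : DefinableFamily L ∅ Φ) :
    DefinableH L H ∅ {a : Fin q → M | (unionOverH H Φ a).Infinite} := by
  let := hStructure L H
  refine CountSaturated.definable_of_forall_exists hsat Set.countable_empty
    (fun a ha => exists_definableH_of_infinite hgeom hdens hind hsat hΦ ha) fun a ha => ?_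
  have hcard := (definableFamily_unionOverH (H := H) hΦ).definable_le_encard
    ((unionOverH H Φ a).ncard + 1)
  refine ⟨_, hcard.compl, fun hle => ?_, fun b hb hinf => hb ?_⟩
  · have hfin := (Set.not_infinite.1 ha).cast_ncard_eq
    rw [Set.mem_ofPred_eq, ← hfin, Nat.cast_le] at hle
    omega
  · simp [Set.Infinite.encard_eq hinf]

/-- (Lemma 3.2.) In a sufficiently saturated `H`-structure, for an
`L`-formula `φ(x, z̄, ȳ)`, the set of parameters `ā` for which the existential `H`-formula
`∃z̄ ∈ H^{|z̄|} φ(x, z̄, ā)` is non-algebraic is `L_H`-definable. -/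
theorem statement6 {M : Type w} (L : FirstOrder.Language.{u, v}) [L.Structure M]
    (H : Set M) (hgeom : Geometric L M) (hH : IsHStructure L H)
    (hsat : CountSaturatedH L H)
    {m q : ℕ} (φ : L.Formula ((Fin 1 ⊕ Fin m) ⊕ Fin q)) :
    DefinableH L H (∅ : Set M)
      {a : Fin q → M | {x : M | ∃ z : Fin m → M, (∀ i, z i ∈ H) ∧
        φ.Realize (Sum.elim (Sum.elim (fun _ => x) z) a)}.Infinite} :=
  statement6_general hgeom hH.1 hH.2.2 hsat
    (Φ := fun g => {x | φ.Realize (Sum.elim (Sum.elim (fun _ => x) (g ∘ .inr)) (g ∘ .inl))})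
    (definable_realize φ (by rintro ((_ | _) | _) <;> exact .proj L))

end HPaper
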